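/- Let 𝒴 be a countably infinite set, let 𝒳 = {a_0, a_1, a_2, …} be a countably infinite set of distinct points, let ℋ = 𝒴^𝒳 be the class of all functions from 𝒳 to 𝒴, and define the instance sequence X_t = a_i for all t with 2^i − 1 ≤ t < 2^{i+1} − 1 (i ≥ 0). Then: (i) there exists an online learning rule (memorization) such that for every f : 𝒳 → 𝒴, with labels Y_t = f(X_t), limsup_{T→∞} (1/T)∑_{t=1}^T 1[Ŷ_t ≠ Y_t] = 0 — so this sequence admits universal online learning under ℋ; yet (ii) for every countable sequence of experts e_1, e_2, … : 𝒳 → 𝒴 there exists f : 𝒳 → 𝒴 such that e_j(a_i) ≠ f(a_i) for every i ≥ 0 and every j ≤ 2^{2^{i+1}}, and consequently, for every sequence (j_T)_{T∈ℕ} with j_T → ∞ and log j_T = o(T), limsup_{T→∞} min_{j ≤ j_T} (1/T)∑_{t=1}^T 1[e_j(X_t) ≠ f(X_t)] ≥ 1/2. Hence the expert-cover condition (existence of a countable expert set with limsup_{T} min_{j ≤ j_T} (1/T)∑_{t≤T} 1[e_j(X_t) ≠ Y*_t] = 0 for every realizable labeling) is not necessary for a process to admit universal online learning when the label space is infinite.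 -/

import Mathlib

/-!
The block structure forces `X_t = ⌊log₂ (t + 1)⌋`. A rule that repeats a label already seen at the
current point errs at most once per distinct point, hence at most `log₂ T + 1` times in `T` rounds,
and `(log₂ T + 1) / T → 0` (`ruleMistakes_memorize_le`, `tendsto_log_add_one_div`).

For the second part, `Y` is infinite while only finitely many experts must be avoided at each point,
so `f i` can be chosen outside the finite set of their values. At the horizon `T = 2^(i+1) - 1`, the
last block has `2^i` rounds, more than half of the total. Once `log (jT T) ≤ T log 2`, all experts
with index at most `jT T` are avoided on that block, so each has error rate at least `1/2`. This
happens for infinitely many `T`, and all rates lie in `[0, 1]`, which bounds the limsup below.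
-/

open Filter MeasureTheory
open scoped ENNReal

attribute [local instance] Classical.propDecidable

noncomputable section


/-- An online learning rule (non-transductive): it sees the history of labeled examples
and the current instance. -/
abbrev OnlineRule (X Y : Type*) := List (X × Y) → X → Y

/-- Number of mistakes of the rule during the first `T` rounds. -/
def ruleMistakes {X Y : Type*} (r : OnlineRule X Y) (xs : ℕ → X) (ys : ℕ → Y) (T : ℕ) : ℕ :=
  ∑ t ∈ Finset.range T,
    if r ((List.range t).map (fun s => (xs s, ys s))) (xs t) = ys t then 0 else 1

/-- Memorization: predict some label recorded in the history for the current instance, if there is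
one, and an arbitrary label otherwise. For histories labeled by a function the choice is unique. -/
def memorize {X Y : Type*} [Nonempty Y] : OnlineRule X Y := fun l x =>
  if h : ∃ y, (x, y) ∈ l then h.choose else Classical.arbitrary Y

theorem memorize_eq {X Y : Type*} [Nonempty Y] (xs : ℕ → X) (f : X → Y) {s t : ℕ} (hst : s < t)
    (h : xs s = xs t) :
    memorize ((List.range t).map (fun s => (xs s, f (xs s)))) (xs t) = f (xs t) := by
  have hex : ∃ y, (xs t, y) ∈ (List.range t).map (fun s => (xs s, f (xs s))) :=
    ⟨f (xs t), List.mem_map.2 ⟨s, List.mem_range.2 hst, by rw [h]⟩⟩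
  unfold memorize
  rw [dif_pos hex]
  obtain ⟨u, -, hu⟩ := List.mem_map.1 hex.choose_spec
  rw [Prod.mk.injEq] at hu
  rw [← hu.2, hu.1]

theorem eq_log_of_blocks (xs : ℕ → ℕ)
    (hxs : ∀ i t : ℕ, 2 ^ i - 1 ≤ t → t < 2 ^ (i + 1) - 1 → xs t = i) (t : ℕ) :
    xs t = Nat.log 2 (t + 1) := by
  have h1 := Nat.pow_log_le_self 2 (Nat.succ_ne_zero t)
  have h2 := Nat.lt_pow_succ_log_self (b := 2) (by norm_num) (t + 1)
  exact hxs _ t (by simp only [Nat.succ_eq_add_one] at h1; omega) (by omega)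

/-- The rounds with a mistake see pairwise distinct instances, all lying in
`{0, …, log₂ T}`. -/
theorem ruleMistakes_memorize_le {Y : Type*} [Nonempty Y] (xs : ℕ → ℕ)
    (hxs : ∀ t, xs t = Nat.log 2 (t + 1)) (f : ℕ → Y) (T : ℕ) :
    ruleMistakes memorize xs (fun t => f (xs t)) T ≤ Nat.log 2 T + 1 := by
  unfold ruleMistakes
  set M := (Finset.range T).filter fun t =>
    ¬ memorize ((List.range t).map (fun s => (xs s, f (xs s)))) (xs t) = f (xs t) with hM
  have hsum : (∑ t ∈ Finset.range T,
      if memorize ((List.range t).map (fun s => (xs s, f (xs s)))) (xs t) = f (xs t)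
        then 0 else 1) = M.card := by
    rw [hM, Finset.card_filter]
    exact Finset.sum_congr rfl fun t _ => by split_ifs <;> simp_all
  rw [hsum, ← Finset.card_range (Nat.log 2 T + 1)]
  refine Finset.card_le_card_of_injOn xs ?_ ?_
  · intro t ht
    have ht' := Finset.mem_range.1 (Finset.mem_filter.1 ht).1
    have := Nat.log_mono_right (b := 2) (show t + 1 ≤ T from ht')
    simp only [Finset.coe_range, Set.mem_Iio, hxs]
    omega
  · intro s hs t ht hst
    rcases lt_trichotomy s t with h | h | h
    · exact absurd (memorize_eq xs f h hst) (Finset.mem_filter.1 ht).2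
    · exact h
    · exact absurd (memorize_eq xs f h hst.symm) (Finset.mem_filter.1 hs).2

theorem tendsto_log_add_one_div :
    Tendsto (fun T : ℕ => ((Nat.log 2 T + 1 : ℕ) : ℝ) / T) atTop (nhds 0) := by
  have h1 : Tendsto (fun T : ℕ => Real.log T / T) atTop (nhds 0) :=
    (Real.isLittleO_log_id_atTop.tendsto_div_nhds_zero).comp tendsto_natCast_atTop_atTop
  have h2 : Tendsto (fun T : ℕ => (1 : ℝ) / T) atTop (nhds 0) :=
    tendsto_one_div_atTop_nhds_zero_nat
  have h3 : Tendsto (fun T : ℕ => Real.log T / T / Real.log 2 + 1 / (T : ℝ)) atTop (nhds 0) := by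
    simpa using (h1.div_const (Real.log 2)).add h2
  refine squeeze_zero (fun T => by positivity) (fun T => ?_) h3
  have h4 : (Nat.log 2 T : ℝ) ≤ Real.log T / Real.log 2 := by
    simpa [Real.logb] using Real.natLog_le_logb T 2
  calc ((Nat.log 2 T + 1 : ℕ) : ℝ) / T ≤ (Real.log T / Real.log 2 + 1) / T := by
        push_cast
        gcongr
    _ = Real.log T / T / Real.log 2 + 1 / (T : ℝ) := by ring

theorem exists_avoiding {Y : Type*} [Infinite Y] (e : ℕ → ℕ → Y) :
    ∃ f : ℕ → Y, ∀ i j : ℕ, 1 ≤ j → j ≤ 2 ^ 2 ^ (i + 1) → e j i ≠ f i := by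
  have h : ∀ i : ℕ, ∃ y : Y, y ∉ (Finset.Icc 1 (2 ^ 2 ^ (i + 1))).image fun j => e j i :=
    fun i => Infinite.exists_notMem_finset _
  choose f hf using h
  exact ⟨f, fun i j h1 h2 he =>
    hf i (Finset.mem_image.2 ⟨j, Finset.mem_Icc.2 ⟨h1, h2⟩, he⟩)⟩

/-- An expert that is wrong at the point `i` is wrong on at least half of the rounds up to the
end of block `i`. -/
theorem half_le_rate {Y : Type*} (xs : ℕ → ℕ)
    (hxs : ∀ i t : ℕ, 2 ^ i - 1 ≤ t → t < 2 ^ (i + 1) - 1 → xs t = i) (g f : ℕ → Y) (i : ℕ)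
    (h : g i ≠ f i) :
    (1 / 2 : ℝ) ≤ (∑ t ∈ Finset.range (2 ^ (i + 1) - 1),
      if g (xs t) = f (xs t) then (0 : ℝ) else 1) / ((2 ^ (i + 1) - 1 : ℕ) : ℝ) := by
  have hp : 1 ≤ 2 ^ i := Nat.one_le_two_pow
  have hq : 2 ^ (i + 1) = 2 * 2 ^ i := by ring
  have hsum : (2 ^ i : ℝ) ≤ ∑ t ∈ Finset.range (2 ^ (i + 1) - 1),
      if g (xs t) = f (xs t) then (0 : ℝ) else 1 := by
    calc (2 ^ i : ℝ) = ∑ t ∈ Finset.Ico (2 ^ i - 1) (2 ^ (i + 1) - 1), (1 : ℝ) := by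
          rw [Finset.sum_const, Nat.card_Ico,
            show 2 ^ (i + 1) - 1 - (2 ^ i - 1) = 2 ^ i by omega]
          simp
      _ = ∑ t ∈ Finset.Ico (2 ^ i - 1) (2 ^ (i + 1) - 1),
            if g (xs t) = f (xs t) then (0 : ℝ) else 1 := by
          refine Finset.sum_congr rfl fun t ht => ?_
          obtain ⟨h1, h2⟩ := Finset.mem_Ico.1 ht
          rw [hxs i t h1 h2, if_neg h]
      _ ≤ _ := by
          refine Finset.sum_le_sum_of_subset_of_nonneg ?_ fun t _ _ => by split_ifs <;> norm_num
          intro t ht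
          exact Finset.mem_range.2 (Finset.mem_Ico.1 ht).2
  have hle : ((2 ^ (i + 1) - 1 : ℕ) : ℝ) ≤ 2 * 2 ^ i := by
    exact_mod_cast (show 2 ^ (i + 1) - 1 ≤ 2 * 2 ^ i by omega)
  have hpos : (0 : ℝ) < ((2 ^ (i + 1) - 1 : ℕ) : ℝ) := by
    exact_mod_cast (show 0 < 2 ^ (i + 1) - 1 by omega)
  rw [le_div_iff₀ hpos]
  linarith

theorem sum_div_mem_Icc {Y : Type*} (xs : ℕ → ℕ) (g f : ℕ → Y) (T : ℕ) :
    (∑ t ∈ Finset.range T, if g (xs t) = f (xs t) then (0 : ℝ) else 1) / T ∈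
      Set.Icc (0 : ℝ) 1 := by
  constructor
  · exact div_nonneg (Finset.sum_nonneg fun t _ => by split_ifs <;> norm_num) (Nat.cast_nonneg T)
  · refine div_le_one_of_le₀ ?_ (Nat.cast_nonneg T)
    calc _ ≤ ∑ t ∈ Finset.range T, (1 : ℝ) :=
          Finset.sum_le_sum fun t _ => by split_ifs <;> norm_num
      _ = T := by simp

/-- For the process repeating each fresh point `a_i = i` for `2^i`
consecutive rounds (`X_t = i` for `2^i - 1 ≤ t < 2^{i+1} - 1`), with the class of all
functions `ℕ → Y` (`Y` countably infinite):
(i) memorization learns universally (average mistake rate tends to `0` for every target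
function); yet
(ii) for every countable family of experts there is a target `f` avoided by each expert
`e j`, `1 ≤ j ≤ 2^(2^(i+1))`, at `a_i`, and hence for every `jT → ∞` with
`log (jT T) = o(T)` the best expert among the first `jT T` still errs on at least half
the rounds in the limsup sense. Thus the expert-cover condition is not necessary for a
process to admit universal online learning with infinite label spaces. -/
theorem statement19 {Y : Type*} [Countable Y] [Infinite Y]
    (xs : ℕ → ℕ) (hxs : ∀ i t : ℕ, 2 ^ i - 1 ≤ t → t < 2 ^ (i + 1) - 1 → xs t = i) :
    (∃ rule : OnlineRule ℕ Y, ∀ f : ℕ → Y,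
      Filter.limsup
        (fun T : ℕ => (ruleMistakes rule xs (fun t => f (xs t)) T : ℝ) / T)
        Filter.atTop = 0) ∧
    (∀ e : ℕ → ℕ → Y, ∃ f : ℕ → Y,
      (∀ i j : ℕ, 1 ≤ j → j ≤ 2 ^ 2 ^ (i + 1) → e j i ≠ f i) ∧
      ∀ jT : ℕ → ℕ, Filter.Tendsto jT Filter.atTop Filter.atTop →
        Filter.Tendsto (fun T : ℕ => Real.log (jT T) / T) Filter.atTop (nhds 0) →
        (1 / 2 : ℝ) ≤
          Filter.limsup
            (fun T : ℕ =>
              sInf {r : ℝ | ∃ j : ℕ, 1 ≤ j ∧ j ≤ jT T ∧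
                r = (∑ t ∈ Finset.range T,
                      if e j (xs t) = f (xs t) then (0 : ℝ) else 1) / T})
            Filter.atTop) := by
  refine ⟨⟨memorize, fun f => ?_⟩, fun e => ?_⟩
  · refine Tendsto.limsup_eq (squeeze_zero (fun T => by positivity) (fun T => ?_)
      tendsto_log_add_one_div)
    have := ruleMistakes_memorize_le xs (eq_log_of_blocks xs hxs) f T
    gcongr
  · obtain ⟨f, hf⟩ := exists_avoiding e
    refine ⟨f, hf, fun jT hj hlog => ?_⟩
    refine le_limsup_of_frequently_le ?_ ?_
    · have hev : ∀ᶠ T : ℕ in atTop, 1 ≤ jT T ∧ Real.log (jT T) / T < Real.log 2 :=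
        (hj.eventually_ge_atTop 1).and (hlog.eventually_lt_const (Real.log_pos one_lt_two))
      have hT : Tendsto (fun i : ℕ => 2 ^ (i + 1) - 1) atTop atTop :=
        tendsto_atTop_mono (fun i => by
          have := Nat.lt_two_pow_self (n := i + 1)
          simp only [id]
          omega) tendsto_id
      refine hT.frequently (Eventually.frequently ?_)
      filter_upwards [hT.eventually hev] with i hi
      obtain ⟨h1, h2⟩ := hi
      have hp : 1 ≤ 2 ^ i := Nat.one_le_two_pow
      have hq : 2 ^ (i + 1) = 2 * 2 ^ i := by ring
      have hpos : (0 : ℝ) < ((2 ^ (i + 1) - 1 : ℕ) : ℝ) := by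
        exact_mod_cast (show 0 < 2 ^ (i + 1) - 1 by omega)
      have hbound : jT (2 ^ (i + 1) - 1) ≤ 2 ^ 2 ^ (i + 1) := by
        have h3 : Real.log (jT (2 ^ (i + 1) - 1)) ≤
            Real.log ((2 : ℝ) ^ (2 ^ (i + 1) - 1)) := by
          rw [Real.log_pow, mul_comm]
          exact ((div_lt_iff₀ hpos).1 h2).le
        have h4 : (jT (2 ^ (i + 1) - 1) : ℝ) ≤ (2 : ℝ) ^ (2 ^ (i + 1) - 1) :=
          (Real.log_le_log_iff (by exact_mod_cast h1) (by positivity)).1 h3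
        have h5 : jT (2 ^ (i + 1) - 1) ≤ 2 ^ (2 ^ (i + 1) - 1) := by exact_mod_cast h4
        exact h5.trans (Nat.pow_le_pow_right (by norm_num) (Nat.sub_le _ _))
      refine le_csInf ⟨_, 1, le_rfl, h1, rfl⟩ ?_
      rintro r ⟨j, hj1, hj2, rfl⟩
      exact half_le_rate xs hxs (e j) f i (hf i j hj1 (hj2.trans hbound))
    -- The rates are bounded above by `1`; for `jT T = 0` the infimum is over `∅`, hence `0`.
    · refine isBoundedUnder_of ⟨1, fun T => ?_⟩
      by_cases h : 1 ≤ jT T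
      · refine le_trans (csInf_le ⟨0, ?_⟩ ⟨1, le_rfl, h, rfl⟩) (sum_div_mem_Icc xs (e 1) f T).2
        rintro r ⟨j, -, -, rfl⟩
        exact (sum_div_mem_Icc xs (e j) f T).1
      · refine (Real.sInf_nonpos ?_).trans zero_le_one
        rintro r ⟨j, hj1, hj2, rfl⟩
        omega
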